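/- arXiv:2409.02852 — 2 statements merged into one kernel-verified Lean document; each statement's English description precedes it below -/
import Mathlib

section
/- There exists a constant C > 0 such that for all integers n and s with 2 ≤ n ≤ s, the entropy H_{B|S} of the discretized Beta(1, n) distribution satisfies |H_{B|S} − (ln s + H_B)| ≤ C · n · (ln n) / s, where H_B = − ∫_0^1 f_n(x) ln f_n(x) dx is the differential entropy of the Beta(1, n) distribution. -/
/-- The entropy (in nats) of the discretization of the `Beta(1, n)` distribution onto the
uniform partition of `[0,1]` into `s` pieces: the `i`-th cell has probability
`(1 - i/s)^n - (1 - (i+1)/s)^n`. -/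
noncomputable def discretizedBetaEntropy (n s : ℕ) : ℝ :=
  -∑ i ∈ Finset.range s,
      ((1 - (i : ℝ) / s) ^ n - (1 - ((i : ℝ) + 1) / s) ^ n) *
        Real.log ((1 - (i : ℝ) / s) ^ n - (1 - ((i : ℝ) + 1) / s) ^ n)

/-- The differential entropy (in nats) of the `Beta(1, n)` distribution, whose density
on `[0, 1]` is `f_n x = n * (1 - x)^(n-1)`. -/
noncomputable def betaOneDifferentialEntropy (n : ℕ) : ℝ :=
  -∫ x in (0 : ℝ)..1,
      (n : ℝ) * (1 - x) ^ (n - 1) * Real.log ((n : ℝ) * (1 - x) ^ (n - 1))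

/-!
Rounding to a cell of width `h` replaces the density `f` by its average `m = q / h` on that cell,
and the entropy this costs is the Jensen gap `negMulLog m - ⨍ negMulLog (f x)`, scaled by `h`. The
gap is nonnegative by concavity, and `log x ≤ x - 1` bounds it by the oscillation of `f` on the
cell. The oscillations of a monotone density telescope, so all cells together cost at most
`h * (f 0 - f 1)`, which for `Beta(1, n)` and `h = 1 / s` is at most `n / s`.
-/

open MeasureTheory Set Real

section JensenGap

variable {Ω : Type*} [MeasurableSpace Ω] {μ : Measure Ω} {f : Ω → ℝ} {a b : ℝ}

lemma integrable_comp_of_ae_mem_isCompact [IsFiniteMeasure μ] {g : ℝ → ℝ} {K : Set ℝ}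
    (hg : Continuous g) (hK : IsCompact K) (hf : AEMeasurable f μ) (hfK : ∀ᵐ x ∂μ, f x ∈ K) :
    Integrable (g ∘ f) μ := by
  obtain ⟨C, hC⟩ := hK.exists_bound_of_continuousOn hg.continuousOn
  exact .of_bound (hg.measurable.comp_aemeasurable hf).aestronglyMeasurable C
    (hfK.mono fun x hx ↦ hC (f x) hx)

lemma neg_negMulLog_le_mul_log_add_div_sub_one {x m : ℝ} (hx : 0 ≤ x) (hm : 0 < m) :
    -negMulLog x ≤ x * (log m + (x / m - 1)) := by
  obtain rfl | hx := hx.eq_or_lt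
  · simp
  have log_ratio_le : log x - log m ≤ x / m - 1 := by
    rw [← log_div hx.ne' hm.ne']
    exact log_le_sub_one_of_pos (div_pos hx hm)
  rw [negMulLog, neg_mul, neg_neg]
  gcongr
  linarith

variable [IsProbabilityMeasure μ]

lemma integral_mem_Icc_of_ae_mem_Icc (hf : AEMeasurable f μ)
    (hfab : ∀ᵐ x ∂μ, f x ∈ Icc a b) : ∫ x, f x ∂μ ∈ Icc a b :=
  (convex_Icc a b).integral_mem isClosed_Icc hfab (.of_mem_Icc a b hf hfab)

lemma integral_negMulLog_le_negMulLog_integral (hf : AEMeasurable f μ) (ha : 0 ≤ a)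
    (hfab : ∀ᵐ x ∂μ, f x ∈ Icc a b) :
    ∫ x, negMulLog (f x) ∂μ ≤ negMulLog (∫ x, f x ∂μ) :=
  concaveOn_negMulLog.le_map_integral continuous_negMulLog.continuousOn isClosed_Ici
    (hfab.mono fun _ hx ↦ ha.trans hx.1) (.of_mem_Icc a b hf hfab)
    (integrable_comp_of_ae_mem_isCompact continuous_negMulLog isCompact_Icc hf hfab)

lemma negMulLog_integral_sub_integral_negMulLog_le (hf : AEMeasurable f μ) (ha : 0 ≤ a)
    (hfab : ∀ᵐ x ∂μ, f x ∈ Icc a b) :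
    negMulLog (∫ x, f x ∂μ) - ∫ x, negMulLog (f x) ∂μ ≤ b - a := by
  have hf_int : Integrable f μ := .of_mem_Icc a b hf hfab
  set m := ∫ x, f x ∂μ with hm_def
  obtain ⟨ham, hmb⟩ : m ∈ Icc a b := integral_mem_Icc_of_ae_mem_Icc hf hfab
  obtain hm | hm := (ha.trans ham).eq_or_lt
  · have f_ae_zero : f =ᵐ[μ] 0 :=
      (integral_eq_zero_iff_of_nonneg_ae (hfab.mono fun _ hx ↦ ha.trans hx.1) hf_int).1 hm.symm
    have integral_eq_zero : ∫ x, negMulLog (f x) ∂μ = 0 :=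
      integral_eq_zero_of_ae (f_ae_zero.mono fun x hx ↦ by simp [hx])
    rw [integral_eq_zero, ← hm, negMulLog_zero]
    linarith
  have pointwise : ∀ᵐ x ∂μ, -negMulLog (f x) ≤ f x * (log m + (b - a) / m) := by
    filter_upwards [hfab] with x hx
    have hfx : 0 ≤ f x := ha.trans hx.1
    refine (neg_negMulLog_le_mul_log_add_div_sub_one hfx hm).trans ?_
    rw [div_sub_one hm.ne']
    gcongr
    exact hx.2
  have integrated : -∫ x, negMulLog (f x) ∂μ ≤ m * (log m + (b - a) / m) := by
    rw [hm_def, ← integral_neg, ← integral_mul_const]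
    exact integral_mono_ae
      (integrable_comp_of_ae_mem_isCompact continuous_negMulLog isCompact_Icc hf hfab).neg
      (hf_int.mul_const _) pointwise
  have expand : m * (log m + (b - a) / m) = -negMulLog m + (b - a) := by
    rw [negMulLog]
    field_simp
  linarith

end JensenGap

section Discretization

variable {f : ℝ → ℝ}

lemma ae_restrict_Ioc_mem_Icc_of_antitoneOn {u v : ℝ} (hf : AntitoneOn f (Icc u v)) :
    ∀ᵐ x ∂volume.restrict (Ioc u v), f x ∈ Icc (f v) (f u) :=
  ae_restrict_of_forall_mem measurableSet_Ioc fun _ hx ↦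
    have huv : u ≤ v := hx.1.le.trans hx.2
    ⟨hf ⟨hx.1.le, hx.2⟩ (right_mem_Icc.2 huv) hx.2,
      hf (left_mem_Icc.2 huv) ⟨hx.1.le, hx.2⟩ hx.1.le⟩

lemma aemeasurable_restrict_Ioc_of_antitoneOn {u v : ℝ} (hf : AntitoneOn f (Icc u v)) :
    AEMeasurable f (volume.restrict (Ioc u v)) :=
  aemeasurable_restrict_of_antitoneOn measurableSet_Ioc (hf.mono Ioc_subset_Icc_self)

lemma intervalIntegrable_negMulLog_of_antitoneOn {u v : ℝ} (huv : u ≤ v)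
    (hf : AntitoneOn f (Icc u v)) :
    IntervalIntegrable (fun x ↦ negMulLog (f x)) volume u v :=
  (intervalIntegrable_iff_integrableOn_Ioc_of_le huv).2 <|
    integrable_comp_of_ae_mem_isCompact continuous_negMulLog isCompact_Icc
      (aemeasurable_restrict_Ioc_of_antitoneOn hf) (ae_restrict_Ioc_mem_Icc_of_antitoneOn hf)

lemma negMulLog_average_sub_average_negMulLog_mem_Icc {u v : ℝ} (huv : u < v)
    (hf : AntitoneOn f (Icc u v)) (hfv : 0 ≤ f v) :
    negMulLog (⨍ x in u..v, f x) - ⨍ x in u..v, negMulLog (f x) ∈ Icc 0 (f u - f v) := by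
  have : NeZero (volume.restrict (Ioc u v)) := ⟨by simp [huv]⟩
  have h_meas := (aemeasurable_restrict_Ioc_of_antitoneOn hf).smul_measure
    (volume.restrict (Ioc u v) univ)⁻¹
  have h_mem := Measure.ae_smul_measure (ae_restrict_Ioc_mem_Icc_of_antitoneOn hf)
    (volume.restrict (Ioc u v) univ)⁻¹
  rw [uIoc_of_le huv.le, average, average]
  exact ⟨sub_nonneg.2 (integral_negMulLog_le_negMulLog_integral h_meas hfv h_mem),
    negMulLog_integral_sub_integral_negMulLog_le h_meas hfv h_mem⟩

lemma mul_negMulLog_div {h : ℝ} (hh : h ≠ 0) (q : ℝ) :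
    h * negMulLog (q / h) = negMulLog q + q * log h := by
  rw [div_eq_mul_inv, negMulLog_mul, negMulLog.eq_def h⁻¹, log_inv]
  field_simp

lemma negMulLog_integral_add_sub_integral_negMulLog_mem_Icc {u v : ℝ} (huv : u < v)
    (hf : AntitoneOn f (Icc u v)) (hfv : 0 ≤ f v) :
    negMulLog (∫ x in u..v, f x) + (∫ x in u..v, f x) * log (v - u)
      - ∫ x in u..v, negMulLog (f x) ∈ Icc 0 ((v - u) * (f u - f v)) := by
  have width_pos : 0 < v - u := sub_pos.2 huv
  obtain ⟨gap_nonneg, gap_le⟩ := negMulLog_average_sub_average_negMulLog_mem_Icc huv hf hfv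
  have scaled_gap : negMulLog (∫ x in u..v, f x) + (∫ x in u..v, f x) * log (v - u)
      - ∫ x in u..v, negMulLog (f x)
      = (v - u) * (negMulLog (⨍ x in u..v, f x) - ⨍ x in u..v, negMulLog (f x)) := by
    rw [interval_average_eq_div, interval_average_eq_div, mul_sub,
      mul_negMulLog_div width_pos.ne', mul_div_cancel₀ _ width_pos.ne']
  rw [scaled_gap]
  exact ⟨by positivity, by gcongr⟩

theorem sum_negMulLog_integral_add_sub_integral_negMulLog_mem_Icc {p : ℕ → ℝ} {h : ℝ} {s : ℕ}
    (hh : 0 < h) (hp : ∀ i, p (i + 1) - p i = h) (hf : AntitoneOn f (Icc (p 0) (p s)))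
    (hfs : 0 ≤ f (p s)) :
    ∑ i ∈ Finset.range s, negMulLog (∫ x in p i..p (i + 1), f x)
      + (∫ x in p 0..p s, f x) * log h - ∫ x in p 0..p s, negMulLog (f x)
      ∈ Icc 0 (h * (f (p 0) - f (p s))) := by
  have step_lt (i : ℕ) : p i < p (i + 1) := sub_pos.1 (hp i ▸ hh)
  have p_mono : Monotone p := monotone_nat_of_le_succ fun i ↦ (step_lt i).le
  have f_anti {i : ℕ} (hi : i < s) : AntitoneOn f (Icc (p i) (p (i + 1))) :=
    hf.mono (Icc_subset_Icc (p_mono i.zero_le) (p_mono hi))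
  have f_nonneg {i : ℕ} (hi : i < s) : 0 ≤ f (p (i + 1)) :=
    hfs.trans <| hf ⟨p_mono (Nat.zero_le _), p_mono hi⟩ (right_mem_Icc.2 (p_mono s.zero_le))
      (p_mono hi)
  have cell {i : ℕ} (hi : i ∈ Finset.range s) :=
    negMulLog_integral_add_sub_integral_negMulLog_mem_Icc (step_lt i)
      (f_anti (Finset.mem_range.1 hi)) (f_nonneg (Finset.mem_range.1 hi))
  simp only [hp] at cell
  rw [← intervalIntegral.sum_integral_adjacent_intervals fun i hi ↦
      AntitoneOn.intervalIntegrable (by rw [uIcc_of_le (step_lt i).le]; exact f_anti hi),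
    ← intervalIntegral.sum_integral_adjacent_intervals fun i hi ↦
      intervalIntegrable_negMulLog_of_antitoneOn (step_lt i).le (f_anti hi),
    ← Finset.sum_range_sub' (fun i ↦ f (p i)), Finset.sum_mul, Finset.mul_sum,
    ← Finset.sum_add_distrib, ← Finset.sum_sub_distrib]
  exact ⟨Finset.sum_nonneg fun i hi ↦ (cell hi).1, Finset.sum_le_sum fun i hi ↦ (cell hi).2⟩

end Discretization

section BetaOne

/-- The density of the `Beta(1, n)` distribution on `[0, 1]`, written as a polynomial on the
whole line: it is meaningful as a density only for `n ≠ 0` and `x ∈ [0, 1]`. Its integrals over the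
cells are the probabilities in `discretizedBetaEntropy`. -/
noncomputable def betaOneDensity (n : ℕ) (x : ℝ) : ℝ :=
  n * (1 - x) ^ (n - 1)

lemma antitoneOn_betaOneDensity (n : ℕ) : AntitoneOn (betaOneDensity n) (Iic 1) := by
  intro x _ y (hy : y ≤ 1) hxy
  unfold betaOneDensity
  gcongr

lemma betaOneDensity_nonneg (n : ℕ) {x : ℝ} (hx : x ≤ 1) : 0 ≤ betaOneDensity n x :=
  mul_nonneg n.cast_nonneg (pow_nonneg (sub_nonneg.2 hx) _)

lemma integral_betaOneDensity (n : ℕ) (u v : ℝ) :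
    ∫ x in u..v, betaOneDensity n x = (1 - u) ^ n - (1 - v) ^ n := by
  have hasDerivAt_antiderivative (x : ℝ) :
      HasDerivAt (fun x ↦ -(1 - x) ^ n) (betaOneDensity n x) x := by
    simpa [betaOneDensity] using (((hasDerivAt_id' x).const_sub 1).fun_pow n).fun_neg
  have continuous_density : Continuous (betaOneDensity n) := by
    unfold betaOneDensity
    fun_prop
  rw [intervalIntegral.integral_eq_sub_of_hasDerivAt (fun x _ ↦ hasDerivAt_antiderivative x)
    (continuous_density.intervalIntegrable u v)]
  ring

lemma discretizedBetaEntropy_eq_sum_negMulLog (n s : ℕ) :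
    discretizedBetaEntropy n s = ∑ i ∈ Finset.range s,
      negMulLog (∫ x in (i : ℝ) / s..((i + 1 : ℕ) : ℝ) / s, betaOneDensity n x) := by
  simp only [discretizedBetaEntropy, integral_betaOneDensity, negMulLog_eq_neg,
    Finset.sum_neg_distrib, Nat.cast_succ]

lemma betaOneDifferentialEntropy_eq_integral_negMulLog (n : ℕ) :
    betaOneDifferentialEntropy n = ∫ x in (0 : ℝ)..1, negMulLog (betaOneDensity n x) := by
  simp only [betaOneDifferentialEntropy, betaOneDensity, negMulLog_eq_neg,
    intervalIntegral.integral_neg]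

theorem discretizedBetaEntropy_approx_differential_general {n s : ℕ} (hn : n ≠ 0) (hs : s ≠ 0) :
    discretizedBetaEntropy n s - (log s + betaOneDifferentialEntropy n) ∈ Icc 0 (n / s : ℝ) := by
  have hs' : (s : ℝ) ≠ 0 := Nat.cast_ne_zero.2 hs
  have mass_eq_one : ∫ x in (0 : ℝ)..1, betaOneDensity n x = 1 := by
    simp [integral_betaOneDensity, hn]
  have drop_le : betaOneDensity n 0 - betaOneDensity n 1 ≤ n :=
    (sub_le_self _ (betaOneDensity_nonneg n le_rfl)).trans_eq (by simp [betaOneDensity])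
  have discretization := sum_negMulLog_integral_add_sub_integral_negMulLog_mem_Icc
    (f := betaOneDensity n) (p := fun i ↦ (i : ℝ) / s) (h := (s : ℝ)⁻¹) (s := s)
    (by positivity) (fun i ↦ by push_cast; ring)
    ((antitoneOn_betaOneDensity n).mono (by simp [hs', Icc_subset_Iic_self]))
    (betaOneDensity_nonneg n (div_self_le_one _))
  simp only [← discretizedBetaEntropy_eq_sum_negMulLog, Nat.cast_zero, zero_div, div_self hs',
    mass_eq_one, ← betaOneDifferentialEntropy_eq_integral_negMulLog, one_mul, log_inv]
    at discretization
  rw [← sub_sub, sub_eq_add_neg (discretizedBetaEntropy n s), div_eq_inv_mul]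
  exact ⟨discretization.1, discretization.2.trans (by gcongr)⟩

end BetaOne

lemma natCast_le_two_mul_mul_log {n : ℕ} (hn : 2 ≤ n) : (n : ℝ) ≤ 2 * n * log n := by
  have log_two_le : log 2 ≤ log n := log_le_log two_pos (by exact_mod_cast hn)
  nlinarith [log_two_gt_d9, (n.cast_nonneg : (0 : ℝ) ≤ n)]

theorem discretizedBetaEntropy_approx_differential :
    ∃ C > (0 : ℝ), ∀ n s : ℕ, 2 ≤ n → n ≤ s →
      |discretizedBetaEntropy n s - (Real.log s + betaOneDifferentialEntropy n)| ≤
        C * n * Real.log n / s := by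
  refine ⟨2, two_pos, fun n s hn hns ↦ ?_⟩
  have h := discretizedBetaEntropy_approx_differential_general (n := n) (s := s) (by lia) (by lia)
  rw [abs_of_nonneg h.1]
  exact h.2.trans (div_le_div_of_nonneg_right (natCast_le_two_mul_mul_log hn) s.cast_nonneg)
end

section
/- Let n ≥ 3 be an integer and let U_1, ..., U_n be independent random variables uniformly distributed on [0, 1], with order statistics U_(1) ≤ ... ≤ U_(n). Then the probability that U_(1) ≥ 4(ln n)/n or that U_(i) − U_(i−1) ≥ 4(ln n)/n for some 2 ≤ i ≤ n is at most ⌈n/(2 ln n)⌉ / n². -/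
open MeasureTheory ProbabilityTheory

/-- The `i`-th order statistic (1-indexed) of a finite family of reals: the `i`-th entry of the
list of values sorted in increasing order (with junk value `0` out of range). -/
noncomputable def orderStat {n : ℕ} (u : Fin n → ℝ) (i : ℕ) : ℝ :=
  ((List.ofFn u).mergeSort (fun a b => a ≤ b)).getD (i - 1) 0

/-!
Cut `[0, 1]` into consecutive cells of length `L = 2 (ln n) / n`. A gap of length at least `2 L`
contains a whole cell, namely the first one that starts after the left end of the gap, so some cell
`[k L, (k + 1) L)` inside `[0, 1]` contains no sample point. Each cell is empty with probability
`(1 - L) ^ n ≤ exp (-n L) = n⁻²`, and there are `⌊1 / L⌋` of them.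
-/

section OrderStat

variable {n : ℕ} {u : Fin n → ℝ}

lemma orderStat_mem {s : Set ℝ} (zero_mem : 0 ∈ s) (hu : ∀ j, u j ∈ s) (i : ℕ) :
    orderStat u i ∈ s := by
  set l := (List.ofFn u).mergeSort (fun a b => a ≤ b)
  change l.getD (i - 1) 0 ∈ s
  rcases lt_or_ge (i - 1) l.length with hi | hi
  · have mem_ofFn : l[i - 1] ∈ List.ofFn u := List.mem_mergeSort.1 (List.getElem_mem hi)
    obtain ⟨j, hj⟩ := List.mem_ofFn.1 mem_ofFn
    rw [List.getD_eq_getElem _ _ hi, ← hj]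
    exact hu j
  · rwa [List.getD_eq_default _ _ hi]

lemma orderStat_le_orderStat {i m : ℕ} (him : i ≤ m) (hm : m ≤ n) :
    orderStat u i ≤ orderStat u m := by
  rcases Nat.eq_zero_or_pos m with rfl | hm_pos
  · rw [Nat.le_zero.1 him]
  have length_eq : ((List.ofFn u).mergeSort (fun a b => a ≤ b)).length = n := by simp
  rw [orderStat, orderStat, List.getD_eq_getElem _ _ (by omega),
    List.getD_eq_getElem _ _ (by omega)]
  exact List.sortedLE_mergeSort.getElem_le_getElem_of_le (Nat.sub_le_sub_right him 1)

lemma exists_orderStat_eq (u : Fin n → ℝ) (j : Fin n) :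
    ∃ m ∈ Finset.Icc 1 n, orderStat u m = u j := by
  have mem_sorted : u j ∈ (List.ofFn u).mergeSort (fun a b => a ≤ b) :=
    List.mem_mergeSort.2 (List.mem_ofFn.2 ⟨j, rfl⟩)
  obtain ⟨k, hk, hkj⟩ := List.getElem_of_mem mem_sorted
  have hkn : k < n := by simpa using hk
  refine ⟨k + 1, Finset.mem_Icc.2 ⟨by omega, hkn⟩, ?_⟩
  rw [orderStat, Nat.add_sub_cancel, List.getD_eq_getElem _ _ hk, hkj]

lemma orderStat_one_le (u : Fin n → ℝ) (j : Fin n) : orderStat u 1 ≤ u j := by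
  obtain ⟨m, hm, hmj⟩ := exists_orderStat_eq u j
  rw [Finset.mem_Icc] at hm
  exact hmj ▸ orderStat_le_orderStat hm.1 hm.2

lemma notMem_Ioo_orderStat {i : ℕ} (hi : i ≤ n) (j : Fin n) :
    u j ∉ Set.Ioo (orderStat u (i - 1)) (orderStat u i) := by
  obtain ⟨m, hm, hmj⟩ := exists_orderStat_eq u j
  rw [Finset.mem_Icc] at hm
  rw [← hmj]
  rintro ⟨lower, upper⟩
  rcases le_or_gt i m with him | hmi
  · exact upper.not_ge (orderStat_le_orderStat him hm.2)
  · exact lower.not_ge (orderStat_le_orderStat (by omega) (by omega))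

/-- Some gap of the sorted sample is at least `δ`, where the gaps are the distance from `0` to the
smallest point and the distances between consecutive points. The distance from the largest point to
the right end of the range is not counted. -/
def HasLargeGap (u : Fin n → ℝ) (δ : ℝ) : Prop :=
  δ ≤ orderStat u 1 ∨ ∃ i ∈ Finset.Icc 2 n, δ ≤ orderStat u i - orderStat u (i - 1)

lemma HasLargeGap.exists_forall_notMem_Ioo {b δ : ℝ} (hgap : HasLargeGap u δ) (hb : 0 ≤ b)
    (hu : ∀ j, u j ∈ Set.Icc 0 b) :
    ∃ a, 0 ≤ a ∧ a + δ ≤ b ∧ ∀ j, u j ∉ Set.Ioo a (a + δ) := by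
  have orderStat_mem_Icc : ∀ i, orderStat u i ∈ Set.Icc 0 b := orderStat_mem ⟨le_rfl, hb⟩ hu
  rcases hgap with first_gap | ⟨i, hi, inner_gap⟩
  · refine ⟨0, le_rfl, by linarith [(orderStat_mem_Icc 1).2], fun j hj => ?_⟩
    linarith [hj.2, orderStat_one_le u j]
  · refine ⟨orderStat u (i - 1), (orderStat_mem_Icc _).1, by linarith [(orderStat_mem_Icc i).2],
      fun j hj => ?_⟩
    exact notMem_Ioo_orderStat (Finset.mem_Icc.1 hi).2 j ⟨hj.1, by linarith [hj.2]⟩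

end OrderStat

section Cells

variable {L : ℝ}

lemma lt_floor_div_iff_add_one_mul_le (hL : 0 < L) (b : ℝ) (k : ℕ) :
    k < ⌊b / L⌋₊ ↔ ((k : ℝ) + 1) * L ≤ b := by
  rw [← Nat.succ_le_iff, Nat.le_floor_iff' k.succ_ne_zero, le_div_iff₀ hL, Nat.cast_succ]

lemma exists_nat_lt_mul_and_add_one_mul_le (hL : 0 < L) {a : ℝ} (ha : 0 ≤ a) :
    ∃ k : ℕ, a < k * L ∧ ((k : ℝ) + 1) * L ≤ a + 2 * L := by
  have floor_mul_le : (⌊a / L⌋₊ : ℝ) * L ≤ a :=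
    (le_div_iff₀ hL).1 (Nat.floor_le (div_nonneg ha hL.le))
  have lt_floor_add_one_mul : a < ((⌊a / L⌋₊ : ℝ) + 1) * L :=
    (div_lt_iff₀ hL).1 (Nat.lt_floor_add_one _)
  refine ⟨⌊a / L⌋₊ + 1, ?_, ?_⟩ <;> push_cast <;> linarith

lemma HasLargeGap.exists_empty_cell {n : ℕ} {u : Fin n → ℝ} {b : ℝ}
    (hgap : HasLargeGap u (2 * L)) (hL : 0 < L) (hb : 0 ≤ b) (hu : ∀ j, u j ∈ Set.Icc 0 b) :
    ∃ k ∈ Finset.range ⌊b / L⌋₊, ∀ j, u j ∉ Set.Ico ((k : ℝ) * L) ((k + 1) * L) := by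
  obtain ⟨a, ha, hab, notMem_gap⟩ := hgap.exists_forall_notMem_Ioo hb hu
  obtain ⟨k, hak, hka⟩ := exists_nat_lt_mul_and_add_one_mul_le hL ha
  refine ⟨k, ?_, fun j hj => notMem_gap j ⟨hak.trans_le hj.1, hj.2.trans_le hka⟩⟩
  exact Finset.mem_range.2 ((lt_floor_div_iff_add_one_mul_le hL b k).2 (hka.trans hab))

end Cells

section Probability

variable {Ω : Type*} [MeasurableSpace Ω] {μ : Measure Ω}

lemma measureReal_forall_notMem_eq_pow {ι E : Type*} [Fintype ι] [MeasurableSpace E]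
    {ν : Measure E} [IsProbabilityMeasure ν] {X : ι → Ω → E} (hX : ∀ i, HasLaw (X i) ν μ)
    (hindep : iIndepFun X μ) {s : Set E} (hs : MeasurableSet s) :
    μ.real {ω | ∀ i, X i ω ∉ s} = (1 - ν.real s) ^ Fintype.card ι := by
  have measureReal_notMem (i : ι) : μ.real (X i ⁻¹' sᶜ) = 1 - ν.real s :=
    ((hX i).measureReal_eq hs.compl).trans (probReal_compl_eq_one_sub hs)
  calc μ.real {ω | ∀ i, X i ω ∉ s} = μ.real (⋂ i, X i ⁻¹' sᶜ) :=
        congrArg μ.real (by ext; simp)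
    _ = ∏ i, μ.real (X i ⁻¹' sᶜ) := by
        simp only [measureReal_def, hindep.meas_iInter fun _ => ⟨sᶜ, hs.compl, rfl⟩,
          ENNReal.toReal_prod]
    _ = (1 - ν.real s) ^ Fintype.card ι := by
        simp only [measureReal_notMem, Finset.prod_const, Finset.card_univ]

lemma measureReal_restrict_Icc_Ico {a b c d : ℝ} (hac : a ≤ c) (hcd : c ≤ d) (hdb : d ≤ b) :
    (volume.restrict (Set.Icc a b)).real (Set.Ico c d) = d - c := by
  have Ico_subset : Set.Ico c d ⊆ Set.Icc a b :=
    Set.Ico_subset_Icc_self.trans (Set.Icc_subset_Icc hac hdb)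
  rw [measureReal_restrict_apply measurableSet_Ico, Set.inter_eq_left.2 Ico_subset,
    Real.volume_real_Ico_of_le hcd]

lemma measureReal_forall_notMem_Ico_eq_pow {ι : Type*} [Fintype ι] {U : ι → Ω → ℝ}
    (hU : ∀ i, HasLaw (U i) (volume.restrict (Set.Icc 0 1)) μ) (hindep : iIndepFun U μ)
    {c d : ℝ} (hc : 0 ≤ c) (hcd : c ≤ d) (hd : d ≤ 1) :
    μ.real {ω | ∀ j, U j ω ∉ Set.Ico c d} = (1 - (d - c)) ^ Fintype.card ι := by
  have : IsProbabilityMeasure (volume.restrict (Set.Icc (0 : ℝ) 1)) := ⟨by simp⟩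
  rw [measureReal_forall_notMem_eq_pow hU hindep measurableSet_Ico,
    measureReal_restrict_Icc_Ico hc hcd hd]

theorem measureReal_hasLargeGap_two_mul_le {n : ℕ} {U : Fin n → Ω → ℝ}
    (hU : ∀ i, HasLaw (U i) (volume.restrict (Set.Icc 0 1)) μ) (hindep : iIndepFun U μ)
    {L : ℝ} (hL : 0 < L) :
    μ.real {ω | HasLargeGap (fun i => U i ω) (2 * L)} ≤ ⌊1 / L⌋₊ * (1 - L) ^ n := by
  have := hindep.isProbabilityMeasure
  let emptyCell (k : ℕ) : Set Ω := {ω | ∀ j, U j ω ∉ Set.Ico ((k : ℝ) * L) ((k + 1) * L)}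
  have ae_mem_Icc : ∀ᵐ ω ∂μ, ∀ j, U j ω ∈ Set.Icc (0 : ℝ) 1 := ae_all_iff.2 fun j =>
    ((hU j).ae_iff measurableSet_Icc.mem).2 (ae_restrict_mem measurableSet_Icc)
  have largeGap_le_iUnion : μ {ω | HasLargeGap (fun i => U i ω) (2 * L)} ≤
      μ (⋃ k ∈ Finset.range ⌊1 / L⌋₊, emptyCell k) := by
    refine measure_mono_ae ?_
    filter_upwards [ae_mem_Icc] with ω mem_Icc hgap
    obtain ⟨k, hk, cell_empty⟩ := HasLargeGap.exists_empty_cell hgap hL zero_le_one mem_Icc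
    exact Set.mem_biUnion hk cell_empty
  have measureReal_emptyCell : ∀ k ∈ Finset.range ⌊1 / L⌋₊,
      μ.real (emptyCell k) = (1 - L) ^ n := by
    intro k hk
    have cell_le_one : ((k : ℝ) + 1) * L ≤ 1 :=
      (lt_floor_div_iff_add_one_mul_le hL 1 k).1 (Finset.mem_range.1 hk)
    rw [measureReal_forall_notMem_Ico_eq_pow hU hindep (by positivity) (by linarith) cell_le_one,
      Fintype.card_fin]
    ring
  calc μ.real {ω | HasLargeGap (fun i => U i ω) (2 * L)}
      ≤ μ.real (⋃ k ∈ Finset.range ⌊1 / L⌋₊, emptyCell k) :=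
        ENNReal.toReal_mono (measure_ne_top _ _) largeGap_le_iUnion
    _ ≤ ∑ k ∈ Finset.range ⌊1 / L⌋₊, μ.real (emptyCell k) := measureReal_biUnion_finset_le _ _
    _ = ⌊1 / L⌋₊ * (1 - L) ^ n := by
        rw [Finset.sum_congr rfl measureReal_emptyCell, Finset.sum_const, Finset.card_range,
          nsmul_eq_mul]

end Probability

lemma two_mul_log_le_self {x : ℝ} (hx : 0 < x) : 2 * Real.log x ≤ x := by
  have le_exp_half : x ≤ Real.exp (x / 2) := by
    simpa only [mul_div_cancel₀ x two_ne_zero] using Real.two_mul_le_exp (x := x / 2)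
  linarith [(Real.log_le_iff_le_exp hx).2 le_exp_half]

lemma one_sub_two_mul_log_div_pow_le {n : ℕ} (hn : 0 < n) :
    (1 - 2 * Real.log n / n) ^ n ≤ 1 / (n : ℝ) ^ 2 := by
  have hn' : (0 : ℝ) < n := Nat.cast_pos.2 hn
  calc (1 - 2 * Real.log n / n) ^ n ≤ Real.exp (-(2 * Real.log n)) :=
        Real.one_sub_div_pow_le_exp_neg (two_mul_log_le_self hn')
    _ = 1 / (n : ℝ) ^ 2 := by
        rw [Real.exp_neg, two_mul, Real.exp_add, Real.exp_log hn', one_div, sq]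

/-- For `n ≥ 3` i.i.d. uniform random variables on `[0, 1]` with order statistics
`U_(1) ≤ ... ≤ U_(n)`, the probability that `U_(1) ≥ 4(ln n)/n` or that some successive gap
`U_(i) - U_(i-1)` is at least `4(ln n)/n` is at most `⌈n/(2 ln n)⌉ / n²`. -/
theorem prob_large_gap_le_log {Ω : Type*} [MeasurableSpace Ω] (μ : Measure Ω)
    [IsProbabilityMeasure μ] (n : ℕ) (hn : 3 ≤ n) (U : Fin n → Ω → ℝ)
    (hmeas : ∀ i, Measurable (U i))
    (hindep : iIndepFun U μ)
    (hunif : ∀ i, μ.map (U i) = volume.restrict (Set.Icc (0 : ℝ) 1)) :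
    (μ {ω | 4 * Real.log n / n ≤ orderStat (fun i => U i ω) 1 ∨
        ∃ i ∈ Finset.Icc 2 n,
          4 * Real.log n / n ≤
            orderStat (fun i => U i ω) i - orderStat (fun i => U i ω) (i - 1)}).toReal ≤
      (⌈(n : ℝ) / (2 * Real.log n)⌉₊ : ℝ) / (n : ℝ) ^ 2 := by
  have hlog : 0 < Real.log n := Real.log_pos (Nat.one_lt_cast.2 (by omega))
  have hU (i : Fin n) : HasLaw (U i) (volume.restrict (Set.Icc 0 1)) μ :=
    ⟨(hmeas i).aemeasurable, hunif i⟩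
  set L : ℝ := 2 * Real.log n / n with hL_def
  have hL : 0 < L := by positivity
  have threshold_eq : 4 * Real.log n / n = 2 * L := by rw [hL_def]; ring
  have inv_L : (n : ℝ) / (2 * Real.log n) = 1 / L := (one_div_div _ _).symm
  rw [threshold_eq, inv_L]
  calc μ.real {ω | HasLargeGap (fun i => U i ω) (2 * L)}
      ≤ ⌊1 / L⌋₊ * (1 - L) ^ n := measureReal_hasLargeGap_two_mul_le hU hindep hL
    _ ≤ ⌈1 / L⌉₊ * (1 / (n : ℝ) ^ 2) :=
        mul_le_mul_of_nonneg (Nat.cast_le.2 (Nat.floor_le_ceil _))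
          (one_sub_two_mul_log_div_pow_le (by omega)) (by positivity) (by positivity)
    _ = ⌈1 / L⌉₊ / (n : ℝ) ^ 2 := mul_one_div _ _
end
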